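/- Define m : ℤ → ℤ by m(k) = dim_ℂ M_k for k ≥ 0, and m(k) = −dim_ℂ M_{−k−10} for k < 0 (these latter spaces have negative weight −k−10 when −10 < k < 0, so that m(k) = 0 for −10 < k < 0, and m(−10) = −1). Then the formal power series F(q,r) := ∑_{a,b ≥ 0} m(b − a) q^a r^b in ℤ⟦q,r⟧ satisfies F(q,r) · (1 − qr)(1 − q⁴)(1 − q⁶)(1 − r⁴)(1 − r⁶) = (1 − q⁴)(1 − q⁶) − q^{10}(1 − r⁴)(1 − r⁶). (This expresses the Corollary χ(M̄_{1,1}, 1/((1−qL₁^{−1})(1−q₁L₁))) = (1/(1−qq₁))·(1/((1−q₁⁴)(1−q₁⁶)) − q^{10}/((1−q⁴)(1−q⁶))) through the identification of the Euler characteristics χ(M̄_{1,1}, L₁^k) with dimensions of spaces of level-one modular forms.) -/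

import Mathlib

open MvPowerSeries
open scoped MatrixGroups

lemma aux_congr (k : ℤ) {G H : Subgroup (GL (Fin 2) ℝ)} [G.HasDetOne] [H.HasDetOne] (h : G = H) :
    Module.finrank ℂ (ModularForm G k) = Module.finrank ℂ (ModularForm H k) := by
  subst h
  rfl

lemma aux_finrank (k : ℤ) :
    (Module.finrank ℂ (ModularForm (CongruenceSubgroup.Gamma 1) k) : ℤ) =
      if 0 ≤ k ∧ k % 2 = 0 then (if k % 12 = 2 then k / 12 else k / 12 + 1) else 0 := by
  rw [aux_congr k CongruenceSubgroup.Gamma_one_coe_eq_SL]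
  rcases lt_or_ge k 0 with hk | hk
  · rw [if_neg (by omega), Module.finrank, ModularForm.levelOne_neg_weight_rank_zero hk]
    simp
  rcases Int.even_or_odd k with he | ho
  · lift k to ℕ using hk
    have he' : Even k := by exact_mod_cast he
    have := he'.two_dvd
    rw [if_pos (by omega), Module.finrank, ModularForm.dimension_level_one k he']
    by_cases h : k % 12 = 2
    · rw [if_pos (by simpa [Nat.ModEq] using h), if_pos (by omega)]
      rw [Cardinal.toNat_natCast]
      simp
    · rw [if_neg (by simpa [Nat.ModEq] using h), if_neg (by omega)]
      rw [Cardinal.toNat_natCast]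
      simp
  · have := Int.odd_iff.mp ho
    rw [if_neg (by omega), Module.finrank, ModularForm.levelOne_odd_weight_rank_zero ho]
    simp

noncomputable def auxP (f : ℕ → ℕ → ℤ) : MvPowerSeries (Fin 2) ℤ := fun n => f (n 0) (n 1)

lemma coeff_auxP (f : ℕ → ℕ → ℤ) (n : Fin 2 →₀ ℕ) : coeff n (auxP f) = f (n 0) (n 1) := rfl

lemma auxP_mul_X0 (f : ℕ → ℕ → ℤ) (k : ℕ) :
    auxP f * X 0 ^ k = auxP (fun a b => if k ≤ a then f (a - k) b else 0) := by
  ext n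
  rw [X_pow_eq, coeff_mul_monomial]
  simp [coeff_auxP]

lemma auxP_mul_X1 (f : ℕ → ℕ → ℤ) (k : ℕ) :
    auxP f * X 1 ^ k = auxP (fun a b => if k ≤ b then f a (b - k) else 0) := by
  ext n
  rw [X_pow_eq, coeff_mul_monomial]
  simp [coeff_auxP]

lemma one_auxP : (1 : MvPowerSeries (Fin 2) ℤ) =
    auxP (fun a b => if a = 0 ∧ b = 0 then 1 else 0) := by
  ext n
  rw [coeff_one, coeff_auxP]
  congr 1
  simp [Finsupp.ext_iff]

lemma auxP_add (f g) : auxP f + auxP g = auxP (fun a b => f a b + g a b) := rfl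
lemma auxP_sub (f g) : auxP f - auxP g = auxP (fun a b => f a b - g a b) := rfl

/-- **Corollary (via modular forms)**: let `m k = dim_ℂ M_k` for `k ≥ 0` (the space of
level-one modular forms of weight `k`) and `m k = -dim_ℂ M_{-k-10}` for `k < 0`.  If
`F = ∑_{a,b ≥ 0} m (b - a) qᵃ rᵇ` in `ℤ⟦q,r⟧` (with `q = X 0`, `r = X 1`), then
`F · (1 − qr)(1 − q⁴)(1 − q⁶)(1 − r⁴)(1 − r⁶) = (1 − q⁴)(1 − q⁶) − q¹⁰ (1 − r⁴)(1 − r⁶)`.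
This expresses `χ(M̄₁,₁, 1/((1−qL₁⁻¹)(1−q₁L₁)))`. -/
theorem corollary_modular_forms (m : ℤ → ℤ)
    (hm_nonneg : ∀ k : ℤ, 0 ≤ k →
      m k = Module.finrank ℂ (ModularForm (CongruenceSubgroup.Gamma 1) k))
    (hm_neg : ∀ k : ℤ, k < 0 →
      m k = -(Module.finrank ℂ (ModularForm (CongruenceSubgroup.Gamma 1) (-k - 10)) : ℤ))
    (F : MvPowerSeries (Fin 2) ℤ)
    (hF : ∀ a b : ℕ,
      MvPowerSeries.coeff (Finsupp.single 0 a + Finsupp.single 1 b) F = m ((b : ℤ) - a)) :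
    F * ((1 - X 0 * X 1) * ((1 - X 0 ^ 4) * ((1 - X 0 ^ 6) *
        ((1 - X 1 ^ 4) * (1 - X 1 ^ 6))))) =
      (1 - X 0 ^ 4) * (1 - X 0 ^ 6) - X 0 ^ 10 * ((1 - X 1 ^ 4) * (1 - X 1 ^ 6)) := by
  have hm : ∀ k : ℤ, m k =
      if k % 2 = 0 then (if k % 12 = 2 then k / 12 else k / 12 + 1) else 0 := by
    intro k
    rcases lt_or_ge k 0 with hk | hk
    · rw [hm_neg k hk, aux_finrank]
      split_ifs <;> omega
    · rw [hm_nonneg k hk, aux_finrank]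
      split_ifs <;> omega
  have hFP : F = auxP (fun a b => m ((b : ℤ) - a)) := by
    ext n
    rw [coeff_auxP, ← hF]
    congr 2
    ext i
    fin_cases i <;> simp
  have hrec : ∀ k : ℤ, m k - m (k - 4) - (m (k - 6) - m (k - 10)) = 0 := by
    intro k
    simp only [hm]
    split_ifs <;> omega
  have hz : ∀ k : ℤ, -10 < k → k < 4 → k ≠ 0 → m k = 0 := by
    intro k h1 h2 h3
    rw [hm]
    split_ifs <;> omega
  have hm0 : m 0 = 1 := by rw [hm]; norm_num
  have hm10 : m (-10) = -1 := by rw [hm]; norm_num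
  set A := auxP (fun a b => if a = 0 then m b else 0) with hA
  set B := auxP (fun a b => if b = 0 ∧ a ≠ 0 then m (-(a : ℤ)) else 0) with hB
  have h1 : F - F * X 0 ^ 1 * X 1 ^ 1 = A + B := by
    rw [hFP, hA, hB, auxP_mul_X0, auxP_mul_X1, auxP_add, auxP_sub]
    congr 1
    funext a b
    rcases a with _ | a <;> rcases b with _ | b <;> simp
  have h2 : A - A * X 1 ^ 4 - (A - A * X 1 ^ 4) * X 1 ^ 6 = 1 := by
    rw [hA, auxP_mul_X1, auxP_sub, auxP_mul_X1, auxP_sub, one_auxP]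
    congr 1
    funext a b
    rcases a with _ | a
    · simp only [if_true, true_and]
      by_cases hb : 10 ≤ b
      · have := hrec b
        rw [if_pos (by omega), if_pos (by omega), if_pos (by omega), if_neg (by omega)]
        push_cast [show 4 ≤ b by omega, show 6 ≤ b by omega, show 4 ≤ b - 6 by omega]
        rw [show (b : ℤ) - 6 - 4 = b - 10 by ring]
        exact this
      · have : b < 10 := by omega
        interval_cases b <;> simp [hm]
    · simp
  have h3 : B - B * X 0 ^ 4 - (B - B * X 0 ^ 4) * X 0 ^ 6 = - (1 * X 0 ^ 10) := by
    rw [hB, auxP_mul_X0, auxP_sub, auxP_mul_X0, auxP_sub, one_auxP, auxP_mul_X0, ← zero_sub,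
      show (0 : MvPowerSeries (Fin 2) ℤ) = auxP (fun _ _ => 0) from rfl, auxP_sub]
    congr 1
    funext a b
    rcases b with _ | b
    · simp only [true_and, and_true]
      by_cases ha : 10 < a
      · have := hrec (10 - a)
        rw [if_pos (by omega), if_pos (by omega), if_pos (by omega), if_pos (by omega),
          if_pos (by omega), if_pos (by omega), if_pos (by omega), if_pos (by omega),
          if_neg (by omega)]
        push_cast [show 4 ≤ a by omega, show 6 ≤ a by omega, show 4 ≤ a - 6 by omega]
        rw [show (10 : ℤ) - a - 10 = -a by ring, show (10 : ℤ) - a - 4 = -(a - 6) by ring,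
          show (10 : ℤ) - a - 6 = -(a - 4) by ring, show (10 : ℤ) - a = -(a - 6 - 4) by ring] at this
        linarith
      · have : a < 11 := by omega
        interval_cases a <;> simp [hm]
    · simp
  linear_combination (1 - X 0 ^ 4) * (1 - X 0 ^ 6) * (1 - X 1 ^ 4) * (1 - X 1 ^ 6) * h1
    + (1 - X 0 ^ 4) * (1 - X 0 ^ 6) * h2 + (1 - X 1 ^ 4) * (1 - X 1 ^ 6) * h3
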